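/- Let B be a separable stable C*-algebra, P₀ ∈ M(B) a projection with P₀ ∼ 1 ∼ 1 − P₀. Then the map α_{P₀} : U(M(B)) → Proj_∞(C(B)) given by U ↦ π(U P₀ U*) is a surjective open continuous map with local cross-sections, and hence a Hurewicz fibration; its fiber over π(P₀) is U_{P₀}(M(B)) = { U ∈ U(M(B)) : U P₀ − P₀ U ∈ B }. -/

import Mathlib

open scoped MultiplierAlgebra

/-- The spectral projection `1_{≥0}(x)` of a self-adjoint element onto `[0, ∞)`,
obtained by applying the indicator function of `[0, ∞)` via the continuous
functional calculus. -/
noncomputable def posSpectralProj {C : Type*} [CStarAlgebra C] (x : C) : C :=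
  cfc (fun t : ℝ => if 0 ≤ t then (1 : ℝ) else 0) x

/-- `x ∈ 𝓜(ℂ, B)` belongs to (the canonical image of) the ideal `B` of its
multiplier algebra. -/
def inCanonicalIdeal {B : Type*} [NonUnitalCStarAlgebra B] (x : 𝓜(ℂ, B)) : Prop :=
  ∃ b : B, (b : 𝓜(ℂ, B)) = x

/-- Murray–von Neumann equivalence of projections. -/
def MvNEquiv {C : Type*} [Mul C] [Star C] (p q : C) : Prop :=
  ∃ v : C, star v * v = p ∧ v * star v = q

/-- `B` is a stable C*-algebra, encoded via the standard characterization (for σ-unital,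
in particular separable, `B`): the multiplier algebra `𝓜(ℂ, B)` contains a sequence of
isometries with pairwise orthogonal ranges whose range projections sum to `1` strictly. -/
def IsStable (B : Type*) [NonUnitalCStarAlgebra B] : Prop :=
  ∃ s : ℕ → 𝓜(ℂ, B),
    (∀ n, star (s n) * s n = 1) ∧
    (∀ m n, m ≠ n → star (s m) * s n = 0) ∧
    ∀ b : B, Filter.Tendsto
      (fun N : ℕ => (∑ n ∈ Finset.range N, s n * star (s n)) * (b : 𝓜(ℂ, B)))
      Filter.atTop (nhds (b : 𝓜(ℂ, B)))

/-- `f` has the homotopy lifting property with respect to all topological spaces,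
i.e. `f` is a Hurewicz fibration. -/
def IsHurewiczFibration {E B' : Type*} [TopologicalSpace E] [TopologicalSpace B']
    (f : E → B') : Prop :=
  ∀ (X : Type*) [TopologicalSpace X] (g : C(X, E)) (H : C(X × unitInterval, B')),
    (∀ x, H (x, 0) = f (g x)) →
    ∃ G : C(X × unitInterval, E), (∀ x, G (x, 0) = g x) ∧ ∀ z, f (G z) = H z

/-- The space `Proj_∞(Q) = { p projection in Q : p ∼ 1 ∼ 1 − p }`. -/
abbrev ProjInfty (Q : Type*) [CStarAlgebra Q] :=
  {p : Q // (IsSelfAdjoint p ∧ IsIdempotentElem p) ∧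
    MvNEquiv p (1 : Q) ∧ MvNEquiv (1 - p) (1 : Q)}

/-!
The group `U(M(B))` acts on `Proj_∞(C(B))` by conjugation through `π`, and `α_{P₀}` is the orbit map
of `π P₀`.

Local sections: projections `p`, `q` of `C(B)` that are close to each other are intertwined by
`q p + (1 - q)(1 - p)`, which is close to `1`. A continuous section of `π` (Bartle-Graves) lifts it
to an element of `M(B)` close to `1`, whose unitary part is carried by `π` to a unitary conjugating
`p` to `q`. This depends continuously on `(p, q)`, is defined within a fixed distance and equals `1`
when `p = q`. Openness and local sections follow at once. Cutting a path into steps shorter than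
that distance and multiplying the unitaries of the steps gives a path lifting that is continuous in
the path, hence the homotopy lifting property.

Surjectivity: if `p ∼ 1 ∼ 1 - p` in `C(B)`, then `p` is the range projection of an isometry which
lifts to an isometry `V` of `M(B)` such that `1 - V V*` dominates the range projection of another
isometry. Stability of `B` gives, by Hilbert's hotel, `1 - V V* ∼ 1`, and so `P₀` and `V V*` are
conjugate by a unitary of `M(B)`.
-/

open Filter
open scoped Topology

section MurrayVonNeumann

namespace MvNEquiv

variable {A : Type*} [Semigroup A] [StarMul A] {p q r : A}

theorem symm (h : MvNEquiv p q) : MvNEquiv q p := by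
  obtain ⟨v, hvp, hvq⟩ := h
  exact ⟨star v, by rwa [star_star], by rwa [star_star]⟩

theorem trans (hp : IsIdempotentElem p) (hr : IsIdempotentElem r) (hpq : MvNEquiv p q)
    (hqr : MvNEquiv q r) : MvNEquiv p r := by
  obtain ⟨v, hvp, hvq⟩ := hpq
  obtain ⟨w, hwq, hwr⟩ := hqr
  refine ⟨w * v, ?_, ?_⟩
  · calc star (w * v) * (w * v) = star v * (star w * w) * v := by
          simp only [star_mul, mul_assoc]
      _ = star v * v * (star v * v) := by rw [hwq, ← hvq]; simp only [mul_assoc]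
      _ = p := by rw [hvp, hp.eq]
  · calc w * v * star (w * v) = w * (v * star v) * star w := by
          simp only [star_mul, mul_assoc]
      _ = w * star w * (w * star w) := by rw [hvq, ← hwq]; simp only [mul_assoc]
      _ = r := by rw [hwr, hr.eq]

theorem map {Q F : Type*} [Mul Q] [Star Q] [FunLike F A Q] [MulHomClass F A Q]
    [StarHomClass F A Q] (f : F) (h : MvNEquiv p q) : MvNEquiv (f p) (f q) := by
  obtain ⟨v, rfl, rfl⟩ := h
  exact ⟨f v, by rw [map_mul, map_star], by rw [map_mul, map_star]⟩

theorem isStarProjection_of_one {A : Type*} [Monoid A] [StarMul A] {p : A} (h : MvNEquiv p 1) :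
    IsStarProjection p := by
  obtain ⟨v, rfl, hv⟩ := h
  refine ⟨?_, .star_mul_self v⟩
  calc star v * v * (star v * v) = star v * (v * star v) * v := by simp only [mul_assoc]
    _ = star v * v := by rw [hv, mul_one]

theorem conj_left {A : Type*} [Monoid A] [StarMul A] {p q u : A} (hu : star u * u = 1)
    (h : MvNEquiv p q) : MvNEquiv (u * p * star u) q := by
  obtain ⟨v, rfl, rfl⟩ := h
  refine ⟨v * star u, by simp only [star_mul, star_star, mul_assoc], ?_⟩
  calc v * star u * star (v * star u) = v * (star u * u) * star v := by
        simp only [star_mul, star_star, mul_assoc]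
    _ = v * star v := by rw [hu, mul_one]

end MvNEquiv

variable {A : Type*} [NonUnitalNormedRing A] [StarRing A] [CStarRing A] {p p' q q' v w : A}

theorem mul_eq_self_of_star_mul_self_eq (hp : IsStarProjection p) (hv : star v * v = p) :
    v * p = v := by
  have hpp : p * p = p := hp.isIdempotentElem.eq
  have expand : star (v * p - v) * (v * p - v) =
      p * (star v * v) * p - p * (star v * v) - (star v * v) * p + star v * v := by
    simp only [star_sub, star_mul, hp.isSelfAdjoint.star_eq]
    noncomm_ring
  rw [hv, hpp, hpp, sub_self, zero_sub, neg_add_cancel,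
    CStarRing.star_mul_self_eq_zero_iff] at expand
  exact sub_eq_zero.1 expand

theorem mul_star_eq_zero_of_orthogonal (hp : IsStarProjection p) (hp' : IsStarProjection p')
    (hpp' : p * p' = 0) (hv : star v * v = p) (hw : star w * w = p') : v * star w = 0 := by
  have hw' : p' * star w = star w := by
    simpa only [star_mul, hp'.isSelfAdjoint.star_eq] using
      congrArg star (mul_eq_self_of_star_mul_self_eq hp' hw)
  calc v * star w = v * p * (p' * star w) := by rw [mul_eq_self_of_star_mul_self_eq hp hv, hw']
    _ = v * (p * p') * star w := by simp only [mul_assoc]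
    _ = 0 := by rw [hpp', mul_zero, zero_mul]

theorem MvNEquiv.exists_add_of_orthogonal (hp : IsStarProjection p) (hp' : IsStarProjection p')
    (hq : IsStarProjection q) (hq' : IsStarProjection q') (hpp' : p * p' = 0) (hqq' : q * q' = 0)
    (h : MvNEquiv p q) (h' : MvNEquiv p' q') :
    ∃ v, star v * v = p + p' ∧ v * star v = q + q' ∧ v * p * star v = q := by
  obtain ⟨v, hvp, hvq⟩ := h
  obtain ⟨w, hwp, hwq⟩ := h'
  have hvw : v * star w = 0 := mul_star_eq_zero_of_orthogonal hp hp' hpp' hvp hwp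
  have hwv : w * star v = 0 := by simpa using congrArg star hvw
  have hvw' : star v * w = 0 := by
    simpa using mul_star_eq_zero_of_orthogonal hq hq' hqq' (v := star v) (w := star w)
      (by rwa [star_star]) (by rwa [star_star])
  have hwv' : star w * v = 0 := by simpa using congrArg star hvw'
  have hwp₀ : w * p = 0 := by rw [← hvp, ← mul_assoc, hwv, zero_mul]
  refine ⟨v + w, ?_, ?_, ?_⟩
  · rw [star_add, add_mul, mul_add, mul_add, hvp, hwp, hvw', hwv', add_zero, zero_add]
  · rw [star_add, add_mul, mul_add, mul_add, hvq, hwq, hvw, hwv, add_zero, zero_add]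
  · rw [add_mul, mul_eq_self_of_star_mul_self_eq hp hvp, hwp₀, add_zero, star_add, mul_add, hvq,
      hvw, add_zero]

theorem MvNEquiv.exists_unitary_conj_eq {A : Type*} [NormedRing A] [StarRing A] [CStarRing A]
    {p q : A} (hp : IsStarProjection p) (hq : IsStarProjection q) (h : MvNEquiv p q)
    (h' : MvNEquiv (1 - p) (1 - q)) : ∃ u : unitary A, (u : A) * p * star (u : A) = q := by
  obtain ⟨u, hu, hu', hup⟩ := MvNEquiv.exists_add_of_orthogonal hp hp.one_sub hq hq.one_sub
    hp.mul_one_sub_self hq.mul_one_sub_self h h'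
  rw [add_sub_cancel] at hu hu'
  exact ⟨⟨u, Unitary.mem_iff.2 ⟨hu, hu'⟩⟩, hup⟩

end MurrayVonNeumann

section PolarDecomposition

variable {A Q : Type*} [CStarAlgebra A] [CStarAlgebra Q] {a : A}

theorem norm_le_one_of_star_mul_self_eq_one {s : A} (hs : star s * s = 1) : ‖s‖ ≤ 1 := by
  have : ‖s‖ * ‖s‖ ≤ 1 := by
    rw [← CStarRing.norm_star_mul_self, hs]
    exact IsStarProjection.norm_le 1 (.one A)
  nlinarith [norm_nonneg s]

theorem continuous_starAlgHom (π : A →⋆ₐ[ℂ] Q) : Continuous π :=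
  AddMonoidHomClass.continuous_of_bound π 1 fun a => by
    simpa using NonUnitalStarAlgHom.norm_apply_le π a

theorem spectrum_star_mul_self_pos (ha : IsUnit (star a * a)) {t : ℝ}
    (ht : t ∈ spectrum ℝ (star a * a)) : 0 < t := by
  let _ := CStarAlgebra.spectralOrder A
  have _ := CStarAlgebra.spectralOrderedRing A
  refine (spectrum_nonneg_of_nonneg (star_mul_self_nonneg a) ht).lt_of_ne ?_
  rintro rfl
  exact spectrum.zero_notMem ℝ ha ht

/-- The inverse `|a|⁻¹ = (a* a)^(-1/2)` of the absolute value of an element of a C*-algebra,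
meaningful when `a* a` is invertible; it gives the unitary part `a |a|⁻¹` of the polar
decomposition of an invertible element. -/
noncomputable def invAbs (a : A) : A := cfc (fun t : ℝ => (√t)⁻¹) (star a * a)

theorem continuousOn_inv_sqrt : ContinuousOn (fun t : ℝ => (√t)⁻¹) (Set.Ioi 0) :=
  Real.continuous_sqrt.continuousOn.inv₀ fun _ ht => (Real.sqrt_pos.2 ht).ne'

theorem continuousOn_inv_sqrt_spectrum (ha : IsUnit (star a * a)) :
    ContinuousOn (fun t : ℝ => (√t)⁻¹) (spectrum ℝ (star a * a)) :=
  continuousOn_inv_sqrt.mono fun _ ht => spectrum_star_mul_self_pos ha ht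

theorem isSelfAdjoint_invAbs (a : A) : IsSelfAdjoint (invAbs a) := cfc_predicate _ _

theorem invAbs_one : invAbs (1 : A) = 1 := by
  simp [invAbs, cfc_apply_one]

theorem isUnit_invAbs (ha : IsUnit (star a * a)) : IsUnit (invAbs a) :=
  isUnit_cfc _ _ (continuousOn_inv_sqrt_spectrum ha) (.star_mul_self a) fun _ ht =>
    inv_ne_zero (Real.sqrt_pos.2 (spectrum_star_mul_self_pos ha ht)).ne'

theorem star_mul_self_mul_invAbs (ha : IsUnit (star a * a)) :
    star (a * invAbs a) * (a * invAbs a) = 1 := by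
  have hcont := continuousOn_inv_sqrt_spectrum ha
  calc star (a * invAbs a) * (a * invAbs a) = invAbs a * (star a * a) * invAbs a := by
        simp only [star_mul, (isSelfAdjoint_invAbs a).star_eq, mul_assoc]
    _ = cfc (fun t : ℝ => (√t)⁻¹ * t * (√t)⁻¹) (star a * a) := by
        rw [cfc_mul (fun t : ℝ => (√t)⁻¹ * t) _ _ (hcont.mul continuousOn_id) hcont,
          cfc_mul _ (fun t : ℝ => t) _ hcont continuousOn_id, cfc_id' ℝ (star a * a), invAbs]
    _ = cfc (fun _ : ℝ => (1 : ℝ)) (star a * a) := by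
        refine cfc_congr fun t ht => ?_
        have ht := spectrum_star_mul_self_pos ha ht
        have : √t ≠ 0 := (Real.sqrt_pos.2 ht).ne'
        field_simp
        exact (Real.sq_sqrt ht.le).symm
    _ = 1 := cfc_const_one ℝ _

theorem continuousOn_invAbs : ContinuousOn (invAbs : A → A) {a | IsUnit a} := by
  refine ContinuousOn.cfc_of_mem_nhdsSet (s := Set.Ioi (0 : ℝ)) _ ?_ ?_ ?_ continuousOn_inv_sqrt
  · refine isOpen_Ioi.mem_nhdsSet.2 (Set.iUnion₂_subset fun a ha t ht => ?_)
    exact spectrum_star_mul_self_pos (ha.star.mul ha) ht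
  · exact (continuous_star.mul continuous_id).continuousOn
  · exact fun a _ => .star_mul_self a

theorem map_invAbs (π : A →⋆ₐ[ℂ] Q) (ha : IsUnit (star a * a)) : π (invAbs a) = invAbs (π a) := by
  have hsa : IsSelfAdjoint (star a * a) := .star_mul_self a
  rw [invAbs, StarAlgHomClass.map_cfc (S := ℂ) π _ _ (continuousOn_inv_sqrt_spectrum ha)
    (continuous_starAlgHom π) hsa (hsa.map π), map_mul, map_star, invAbs]

open scoped Classical in
/-- The unitary part `a |a|⁻¹` of an invertible element `a` of a C*-algebra. It is totalized by
the value `1` at elements that are not invertible. -/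
noncomputable def polarUnitary (a : A) : unitary A :=
  if ha : IsUnit a then
    ⟨a * invAbs a, (ha.mul (isUnit_invAbs (ha.star.mul ha))).mem_unitary_of_star_mul_self
      (star_mul_self_mul_invAbs (ha.star.mul ha))⟩
  else 1

theorem coe_polarUnitary (ha : IsUnit a) : (polarUnitary a : A) = a * invAbs a := by
  rw [polarUnitary, dif_pos ha]

theorem polarUnitary_one : polarUnitary (1 : A) = 1 := by
  ext
  rw [coe_polarUnitary isUnit_one, invAbs_one, mul_one, OneMemClass.coe_one]

theorem continuousOn_polarUnitary : ContinuousOn (polarUnitary : A → unitary A) {a | IsUnit a} := by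
  rw [Topology.IsInducing.subtypeVal.continuousOn_iff]
  exact (continuousOn_id.mul continuousOn_invAbs).congr fun _ ha => coe_polarUnitary ha

theorem map_polarUnitary (π : A →⋆ₐ[ℂ] Q) (ha : IsUnit a) :
    π (polarUnitary a) = polarUnitary (π a) := by
  rw [coe_polarUnitary ha, coe_polarUnitary (ha.map π), map_mul, map_invAbs π (ha.star.mul ha)]

theorem polarUnitary_conj_eq {p q z : A} (hp : IsSelfAdjoint p) (hq : IsSelfAdjoint q)
    (hz : IsUnit z) (hzp : z * p = q * z) :
    (polarUnitary z : A) * p * star (polarUnitary z : A) = q := by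
  have hpz : p * star z = star z * q := by
    simpa only [star_mul, hp.star_eq, hq.star_eq] using congrArg star hzp
  have hcomm : Commute (star z * z) p := by
    rw [commute_iff_eq, mul_assoc, hzp, ← mul_assoc, ← hpz, mul_assoc]
  have hintertwine : (polarUnitary z : A) * p = q * polarUnitary z := by
    rw [coe_polarUnitary hz, mul_assoc, show invAbs z * p = p * invAbs z from hcomm.cfc_real _,
      ← mul_assoc, hzp, mul_assoc]
  rw [hintertwine, mul_assoc, Unitary.mul_star_self_of_mem (polarUnitary z).2, mul_one]

end PolarDecomposition

section ProjectionTransport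

variable {A : Type*} [CStarAlgebra A] {p q : A}

/-- The element `q p + (1 - q)(1 - p)`, which intertwines the projections `p` and `q` and is close
to `1` when they are close to each other. -/
def projIntertwiner {R : Type*} [Ring R] (p q : R) : R := q * p + (1 - q) * (1 - p)

theorem projIntertwiner_mul {R : Type*} [Ring R] {p q : R} (hp : IsIdempotentElem p)
    (hq : IsIdempotentElem q) : projIntertwiner p q * p = q * projIntertwiner p q := by
  rw [projIntertwiner, add_mul, mul_add, mul_assoc, mul_assoc, hp.eq, hp.one_sub_mul_self,
    ← mul_assoc, ← mul_assoc, hq.eq, hq.mul_one_sub_self, mul_zero, zero_mul]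

theorem projIntertwiner_self {R : Type*} [Ring R] {p : R} (hp : IsIdempotentElem p) :
    projIntertwiner p p = 1 := by
  rw [projIntertwiner, hp.eq, hp.one_sub.eq, add_sub_cancel]

theorem norm_projIntertwiner_sub_one_le (hp : IsStarProjection p) (hq : IsStarProjection q) :
    ‖projIntertwiner p q - 1‖ ≤ 2 * dist p q := by
  have factor : projIntertwiner p q - 1 = q * (p - q) + (q - p) * p := by
    simp only [projIntertwiner, mul_sub, sub_mul, mul_one, one_mul, hp.isIdempotentElem.eq,
      hq.isIdempotentElem.eq]
    abel
  calc ‖projIntertwiner p q - 1‖ ≤ ‖q‖ * ‖p - q‖ + ‖q - p‖ * ‖p‖ := by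
        rw [factor]
        exact (norm_add_le _ _).trans (add_le_add (norm_mul_le _ _) (norm_mul_le _ _))
    _ ≤ 1 * ‖p - q‖ + ‖q - p‖ * 1 := by
        gcongr
        · exact hq.norm_le
        · exact hp.norm_le
    _ = 2 * dist p q := by rw [norm_sub_rev q p, dist_eq_norm]; ring

theorem continuous_projIntertwiner : Continuous fun z : A × A => projIntertwiner z.1 z.2 := by
  unfold projIntertwiner
  fun_prop

end ProjectionTransport

section BartleGraves

variable {X E F : Type*} [TopologicalSpace X] [NormalSpace X] [ParacompactSpace X]
  [NormedAddCommGroup E] [NormedSpace ℝ E] [NormedAddCommGroup F] [NormedSpace ℝ F]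

theorem exists_continuous_approx_lift (T : E →L[ℝ] F) {C : ℝ} (hC₀ : 0 ≤ C)
    (hC : ∀ y, ∃ x, T x = y ∧ ‖x‖ ≤ C * ‖y‖) (φ : C(X, F)) {ε : ℝ} (hε : 0 < ε) :
    ∃ g : C(X, E), ∀ x, ‖g x‖ ≤ C * (‖φ x‖ + ε) ∧ ‖φ x - T (g x)‖ ≤ ε := by
  let t (x : X) : Set E := Metric.closedBall 0 (C * (‖φ x‖ + ε)) ∩ T ⁻¹' Metric.closedBall (φ x) ε
  have convex_t (x : X) : Convex ℝ (t x) :=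
    (convex_closedBall _ _).inter ((convex_closedBall _ _).linear_preimage T.toLinearMap)
  have locally_const_mem_t (x : X) : ∃ c : E, ∀ᶠ y in 𝓝 x, c ∈ t y := by
    obtain ⟨c, hcx, hc⟩ := hC (φ x)
    refine ⟨c, ?_⟩
    filter_upwards [φ.continuous.continuousAt (Metric.closedBall_mem_nhds (φ x) hε)] with y hy
    replace hy : dist (φ x) (φ y) ≤ ε := by rwa [dist_comm]
    refine ⟨?_, by rwa [Set.mem_preimage, hcx]⟩
    rw [mem_closedBall_zero_iff]
    refine hc.trans (mul_le_mul_of_nonneg_left ?_ hC₀)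
    rw [dist_eq_norm] at hy
    linarith [norm_le_norm_add_norm_sub' (φ x) (φ y)]
  obtain ⟨g, hg⟩ := exists_continuous_forall_mem_convex_of_local_const convex_t locally_const_mem_t
  exact ⟨g, fun x => ⟨mem_closedBall_zero_iff.1 (hg x).1, mem_closedBall_iff_norm'.1 (hg x).2⟩⟩

-- Lift approximately, then lift the error, and so on; the successive corrections are summable.
theorem exists_continuous_lift [CompleteSpace E] [CompleteSpace F] (T : E →L[ℝ] F)
    (hT : Function.Surjective T) (φ : C(X, F)) : ∃ g : C(X, E), ∀ x, T (g x) = φ x := by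
  obtain ⟨C, hC₀, hC⟩ := T.exists_preimage_norm_le hT
  choose lift hlift using fun (n : ℕ) (ψ : C(X, F)) =>
    exists_continuous_approx_lift T hC₀.le hC ψ (pow_pos (one_half_pos (α := ℝ)) n)
  let err (n : ℕ) : C(X, F) :=
    n.rec φ fun k ψ => ψ - (⟨T, T.continuous⟩ : C(E, F)).comp (lift k ψ)
  have err_succ (n : ℕ) (x : X) : err (n + 1) x = err n x - T (lift n (err n) x) := rfl
  have norm_err_le (n : ℕ) (x : X) : ‖err (n + 1) x‖ ≤ (1 / 2) ^ n := (hlift n (err n) x).2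
  let corr (n : ℕ) : C(X, E) := lift (n + 1) (err (n + 1))
  have norm_corr_le (n : ℕ) (x : X) : ‖corr n x‖ ≤ C * (2 * (1 / 2) ^ n) := by
    refine (hlift (n + 1) _ x).1.trans (mul_le_mul_of_nonneg_left ?_ hC₀.le)
    have : (1 / 2 : ℝ) ^ (n + 1) ≤ (1 / 2) ^ n :=
      pow_le_pow_of_le_one one_half_pos.le (by norm_num) n.le_succ
    linarith [norm_err_le n x]
  have summable_bound : Summable fun n : ℕ => C * (2 * (1 / 2 : ℝ) ^ n) :=
    (summable_geometric_two.mul_left 2).mul_left C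
  have hasSum_corr (x : X) : HasSum (fun n => T (corr n x)) (err 1 x) := by
    rw [((summable_bound.of_norm_bounded (norm_corr_le · x)).mapL T).hasSum_iff_tendsto_nat]
    have partial_sum (n : ℕ) : ∑ k ∈ Finset.range n, T (corr k x) = err 1 x - err (n + 1) x := by
      refine .trans (Finset.sum_congr rfl fun k _ => ?_)
        (Finset.sum_range_sub' (fun k => err (k + 1) x) n)
      rw [err_succ (k + 1), sub_sub_cancel]
    have err_tendsto : Tendsto (fun n => err (n + 1) x) atTop (𝓝 0) :=
      squeeze_zero_norm (norm_err_le · x)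
        (tendsto_pow_atTop_nhds_zero_of_lt_one (by norm_num) (by norm_num))
    simpa only [partial_sum, sub_zero] using err_tendsto.const_sub (err 1 x)
  refine ⟨lift 0 φ + ⟨fun x => ∑' n, corr n x,
    continuous_tsum (fun n => (corr n).continuous) summable_bound norm_corr_le⟩, fun x => ?_⟩
  calc T (lift 0 φ x + ∑' n, corr n x) = T (lift 0 φ x) + err 1 x := by
        rw [map_add, T.map_tsum (summable_bound.of_norm_bounded (norm_corr_le · x)),
          (hasSum_corr x).tsum_eq]
    _ = φ x := add_sub_cancel _ _

theorem exists_continuous_rightInverse_map_zero [CompleteSpace E] [CompleteSpace F] (T : E →L[ℝ] F)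
    (hT : Function.Surjective T) : ∃ σ : C(F, E), Function.RightInverse σ T ∧ σ 0 = 0 := by
  obtain ⟨g, hg⟩ := exists_continuous_lift T hT (.id F)
  refine ⟨g - .const F (g 0), fun y => ?_, ?_⟩
  · simp [hg]
  · simp

end BartleGraves

section UnitaryTransport

variable {A Q : Type*} [CStarAlgebra A] [CStarAlgebra Q]

theorem exists_unitary_transport (π : A →⋆ₐ[ℂ] Q) (hπ : Function.Surjective π) :
    ∃ (τ : Q × Q → unitary A) (δ : ℝ), 0 < δ ∧
      ContinuousOn τ {z | IsStarProjection z.1 ∧ IsStarProjection z.2 ∧ dist z.1 z.2 < δ} ∧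
      (∀ p q, IsStarProjection p → IsStarProjection q → dist p q < δ →
        π (τ (p, q)) * p * star (π (τ (p, q))) = q) ∧
      ∀ p, IsStarProjection p → τ (p, p) = 1 := by
  let πL : A →L[ℝ] Q := ContinuousLinearMap.restrictScalars ℝ
    (⟨π.toAlgHom.toLinearMap, continuous_starAlgHom π⟩ : A →L[ℂ] Q)
  obtain ⟨σ, hσπ : Function.RightInverse σ π, hσ₀⟩ := exists_continuous_rightInverse_map_zero πL hπ
  obtain ⟨ρ, hρ, hρσ⟩ : ∃ ρ > 0, ∀ x, ‖x‖ < ρ → ‖σ x‖ < 1 := by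
    simpa [hσ₀] using Metric.continuousAt_iff.1 (σ.continuous.continuousAt (x := 0)) 1 one_pos
  let a (z : Q × Q) : A := 1 + σ (projIntertwiner z.1 z.2 - 1)
  have ha : Continuous a := by
    have := continuous_projIntertwiner (A := Q)
    fun_prop
  have map_a (z : Q × Q) : π (a z) = projIntertwiner z.1 z.2 := by
    rw [map_add, map_one, hσπ, add_sub_cancel]
  have isUnit_a {p q : Q} (hp : IsStarProjection p) (hq : IsStarProjection q)
      (hpq : dist p q < ρ / 2) : IsUnit (a (p, q)) := by
    have : ‖projIntertwiner p q - 1‖ < ρ := by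
      linarith [norm_projIntertwiner_sub_one_le hp hq]
    have := isUnit_one_sub_of_norm_lt_one ((norm_neg (σ _)).trans_lt (hρσ _ this))
    rwa [sub_neg_eq_add] at this
  refine ⟨fun z => polarUnitary (a z), ρ / 2, half_pos hρ, ?_, fun p q hp hq hpq => ?_, ?_⟩
  · exact continuousOn_polarUnitary.comp ha.continuousOn
      fun z ⟨hz₁, hz₂, hz⟩ => isUnit_a hz₁ hz₂ hz
  · have hunit := isUnit_a hp hq hpq
    rw [map_polarUnitary π hunit, map_a]
    refine polarUnitary_conj_eq hp.isSelfAdjoint hq.isSelfAdjoint ?_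
      (projIntertwiner_mul hp.isIdempotentElem hq.isIdempotentElem)
    rw [← map_a (p, q)]
    exact hunit.map π
  · intro p hp
    simp only [a, projIntertwiner_self hp.isIdempotentElem, sub_self, hσ₀, add_zero,
      polarUnitary_one]

end UnitaryTransport

section PathTransport

open scoped unitInterval

variable {G P : Type*} [PseudoMetricSpace P] [Monoid G] [TopologicalSpace G] [MulAction G P]

/-- A continuous choice, for every two points `p`, `q` of a `G`-space at distance less than a fixed
radius, of an element of `G` moving `p` to `q`, normalized to be `1` when `p = q`. The values of
`toFun` at pairs that are further apart are junk. -/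
structure UniformTransporter (G P : Type*) [PseudoMetricSpace P] [Monoid G] [TopologicalSpace G]
    [MulAction G P] where
  toFun : P × P → G
  radius : ℝ
  radius_pos : 0 < radius
  continuousOn : ContinuousOn toFun {z | dist z.1 z.2 < radius}
  smul_eq : ∀ p q, dist p q < radius → toFun (p, q) • p = q
  diag : ∀ p, toFun (p, p) = 1

theorem exists_continuous_modulus {K : Type*} [PseudoMetricSpace K] [CompactSpace K] {δ : ℝ}
    (hδ : 0 < δ) :
    ∃ ε : C(C(K, P), ℝ), ∀ γ, 0 < ε γ ∧ ∀ s t, dist s t ≤ ε γ → dist (γ s) (γ t) < δ := by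
  let good (γ : C(K, P)) : Set ℝ := {e | 0 < e ∧ ∀ s t, dist s t ≤ e → dist (γ s) (γ t) < δ}
  have convex_good (γ : C(K, P)) : Convex ℝ (good γ) := by
    refine Set.OrdConnected.convex ⟨fun x hx y hy z hz => ?_⟩
    exact ⟨hx.1.trans_le hz.1, fun s t hst => hy.2 s t (hst.trans hz.2)⟩
  refine exists_continuous_forall_mem_convex_of_local_const convex_good fun γ => ?_
  obtain ⟨e, he, hγ⟩ := Metric.uniformContinuous_iff.1
    (CompactSpace.uniformContinuous_of_continuous γ.continuous) (δ / 3) (by positivity)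
  refine ⟨e / 2, ?_⟩
  filter_upwards [Metric.ball_mem_nhds γ (show 0 < δ / 3 by positivity)] with η hη
  refine ⟨half_pos he, fun s t hst => ?_⟩
  have close (u : K) : dist (η u) (γ u) < δ / 3 :=
    (ContinuousMap.dist_apply_le_dist (f := η) (g := γ) u).trans_lt hη
  calc dist (η s) (η t) ≤ dist (η s) (γ s) + dist (γ s) (γ t) + dist (η t) (γ t) := by
        rw [dist_comm (η t)]
        exact dist_triangle4 _ _ _ _
    _ < δ := by linarith [close s, close t, hγ (hst.trans_lt (half_lt_self he))]

/-- The `k`-th node `min (k * ε) t` of the subdivision with mesh `ε` of the interval from `0` to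
`t`. -/
noncomputable def gridPoint (ε : ℝ) (k : ℕ) (t : I) : I :=
  min (Set.projIcc 0 1 zero_le_one (k * ε)) t

theorem coe_gridPoint {ε : ℝ} (hε : 0 ≤ ε) (k : ℕ) (t : I) :
    (gridPoint ε k t : ℝ) = min (k * ε) t := by
  have hkε : 0 ≤ k * ε := by positivity
  have hcoe : (gridPoint ε k t : ℝ) = min (max 0 (min 1 (k * ε))) t := rfl
  rw [hcoe, max_eq_right (le_min zero_le_one hkε), min_right_comm, min_eq_right t.2.2, min_comm]

theorem gridPoint_zero (ε : ℝ) (t : I) : gridPoint ε 0 t = 0 := by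
  rw [gridPoint, Nat.cast_zero, zero_mul, Set.projIcc_left]
  exact min_eq_left t.2.1

theorem gridPoint_apply_zero (ε : ℝ) (k : ℕ) : gridPoint ε k 0 = 0 :=
  min_eq_right unitInterval.nonneg'

theorem gridPoint_eq_self {ε : ℝ} {k : ℕ} (hk : 1 ≤ k * ε) (t : I) : gridPoint ε k t = t := by
  rw [gridPoint, Set.projIcc_of_right_le _ hk]
  exact min_eq_right unitInterval.le_one'

theorem dist_gridPoint_succ_le {ε : ℝ} (hε : 0 ≤ ε) (k : ℕ) (t : I) :
    dist (gridPoint ε k t) (gridPoint ε (k + 1) t) ≤ ε := by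
  rw [Subtype.dist_eq, coe_gridPoint hε, coe_gridPoint hε, Real.dist_eq]
  calc |min (k * ε) (t : ℝ) - min ((k + 1 : ℕ) * ε) (t : ℝ)|
      ≤ max |k * ε - (k + 1 : ℕ) * ε| |(t : ℝ) - t| := abs_min_sub_min_le_max _ _ _ _
    _ = ε := by
        rw [sub_self, abs_zero, max_eq_left (abs_nonneg _), ← sub_mul, abs_mul, abs_of_nonneg hε]
        simp

theorem continuous_gridPoint (k : ℕ) : Continuous fun z : ℝ × I => gridPoint z.1 k z.2 :=
  (continuous_projIcc.comp (by fun_prop)).min continuous_snd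

namespace UniformTransporter

theorem isOpenMap_smul [ContinuousMul G] (τ : UniformTransporter G P) (p₀ : P) :
    IsOpenMap fun g : G => g • p₀ := by
  refine isOpenMap_iff_nhds_le.2 fun g s hs => ?_
  have tendsto_lift : Tendsto (fun q => τ.toFun (g • p₀, q) * g) (𝓝 (g • p₀)) (𝓝 g) := by
    have hτ : ContinuousAt τ.toFun (g • p₀, g • p₀) :=
      τ.continuousOn.continuousAt <|
        (isOpen_lt continuous_dist continuous_const).mem_nhds (by simpa using τ.radius_pos)
    have := (hτ.comp (f := fun q => (g • p₀, q)) (by fun_prop)).mul_const g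
    simpa only [ContinuousAt, Function.comp_apply, τ.diag, one_mul] using this
  filter_upwards [tendsto_lift hs, Metric.ball_mem_nhds _ τ.radius_pos] with q hq hqd
  rw [Metric.mem_ball, dist_comm] at hqd
  simpa only [Set.mem_preimage, mul_smul, τ.smul_eq _ _ hqd] using hq

theorem exists_local_section [ContinuousMul G] (τ : UniformTransporter G P) {p₀ : P}
    (hsurj : Function.Surjective fun g : G => g • p₀) (p : P) :
    ∃ V : Set P, IsOpen V ∧ p ∈ V ∧ ∃ cs : C(V, G), ∀ v : V, cs v • p₀ = (v : P) := by
  obtain ⟨g, rfl⟩ := hsurj p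
  have dist_lt (v : Metric.ball (g • p₀) τ.radius) : dist (g • p₀) v < τ.radius := by
    rw [dist_comm]
    exact v.2
  refine ⟨Metric.ball (g • p₀) τ.radius, Metric.isOpen_ball, Metric.mem_ball_self τ.radius_pos,
    ⟨fun v => τ.toFun (g • p₀, v) * g, ?_⟩, fun v => ?_⟩
  · exact (τ.continuousOn.comp_continuous (by fun_prop) dist_lt).mul_const g
  · rw [ContinuousMap.coe_mk, mul_smul, τ.smul_eq _ _ (dist_lt v)]

/-- The product of the first `k` elements of `G` by which `τ` moves `γ 0` along the subdivision of
`γ` of mesh `ε`, stopped at time `t`. -/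
noncomputable def stepTransport (τ : UniformTransporter G P) (ε : ℝ) (γ : C(I, P)) (t : I) : ℕ → G
  | 0 => 1
  | k + 1 => τ.toFun (γ (gridPoint ε k t), γ (gridPoint ε (k + 1) t)) * τ.stepTransport ε γ t k

variable (τ : UniformTransporter G P) {ε : ℝ} {γ : C(I, P)}

theorem stepTransport_smul (hε : 0 ≤ ε) (hγ : ∀ s t, dist s t ≤ ε → dist (γ s) (γ t) < τ.radius)
    (t : I) (k : ℕ) : τ.stepTransport ε γ t k • γ 0 = γ (gridPoint ε k t) := by
  induction k with
  | zero => rw [stepTransport, one_smul, gridPoint_zero]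
  | succ k ih =>
    rw [stepTransport, mul_smul, ih, τ.smul_eq _ _ (hγ _ _ (dist_gridPoint_succ_le hε k t))]

theorem stepTransport_at_zero (ε : ℝ) (γ : C(I, P)) (k : ℕ) : τ.stepTransport ε γ 0 k = 1 := by
  induction k with
  | zero => rfl
  | succ k ih => rw [stepTransport, gridPoint_apply_zero, gridPoint_apply_zero, τ.diag, ih, one_mul]

theorem stepTransport_eq_of_le (hε : 0 ≤ ε) {k l : ℕ} (hk : 1 ≤ k * ε) (hkl : k ≤ l) (t : I) :
    τ.stepTransport ε γ t l = τ.stepTransport ε γ t k := by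
  induction l, hkl using Nat.le_induction with
  | base => rfl
  | succ l hl ih =>
    have past_one {m : ℕ} (hm : k ≤ m) : 1 ≤ m * ε := hk.trans (by gcongr)
    rw [stepTransport, gridPoint_eq_self (past_one hl), gridPoint_eq_self (past_one hl.step),
      τ.diag, one_mul, ih]

theorem continuous_stepTransport [ContinuousMul G] {ε : C(C(I, P), ℝ)}
    (hε : ∀ γ, 0 < ε γ ∧ ∀ s t, dist s t ≤ ε γ → dist (γ s) (γ t) < τ.radius) (k : ℕ) :
    Continuous fun z : C(I, P) × I => τ.stepTransport (ε z.1) z.1 z.2 k := by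
  induction k with
  | zero => exact continuous_const
  | succ k ih =>
    have eval_grid (m : ℕ) : Continuous fun z : C(I, P) × I => z.1 (gridPoint (ε z.1) m z.2) := by
      have := (continuous_gridPoint m).comp
        (f := fun z : C(I, P) × I => (ε z.1, z.2)) (by fun_prop)
      fun_prop
    exact (τ.continuousOn.comp_continuous ((eval_grid k).prodMk (eval_grid (k + 1)))
      fun z => (hε z.1).2 _ _ (dist_gridPoint_succ_le (hε z.1).1.le k z.2)).mul ih

theorem exists_pathTransport [ContinuousMul G] (τ : UniformTransporter G P) :
    ∃ L : C(C(I, P) × I, G), (∀ γ, L (γ, 0) = 1) ∧ ∀ γ t, L (γ, t) • γ 0 = γ t := by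
  obtain ⟨ε, hε⟩ := exists_continuous_modulus (K := I) (P := P) τ.radius_pos
  have hε₀ (γ : C(I, P)) : 0 < ε γ := (hε γ).1
  let N (γ : C(I, P)) : ℕ := ⌈1 / ε γ⌉₊
  have one_le_N_mul (γ : C(I, P)) : 1 ≤ N γ * ε γ := (div_le_iff₀ (hε₀ γ)).1 (Nat.le_ceil _)
  refine ⟨⟨fun z => τ.stepTransport (ε z.1) z.1 z.2 (N z.1), ?_⟩,
    fun γ => τ.stepTransport_at_zero _ γ _, fun γ t => ?_⟩
  -- Nearby the number of steps is bounded, and further steps do not change the product.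
  · refine continuous_iff_continuousAt.2 fun z₀ => ?_
    have hhalf : 0 < ε z₀.1 / 2 := half_pos (hε₀ _)
    have hnear : ∀ᶠ z in 𝓝 z₀, ε z₀.1 / 2 < ε z.1 :=
      (ε.continuous.comp continuous_fst).continuousAt.eventually
        (lt_mem_nhds (half_lt_self (hε₀ z₀.1)))
    refine (τ.continuous_stepTransport hε ⌈1 / (ε z₀.1 / 2)⌉₊).continuousAt.congr ?_
    filter_upwards [hnear] with z hz
    exact τ.stepTransport_eq_of_le (hε₀ z.1).le (one_le_N_mul z.1)
      (Nat.ceil_le_ceil (one_div_le_one_div_of_le hhalf hz.le)) z.2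
  · exact (τ.stepTransport_smul (hε₀ γ).le (hε γ).2 t (N γ)).trans
      (by rw [gridPoint_eq_self (one_le_N_mul γ)])

theorem isHurewiczFibration_smul [ContinuousMul G] (τ : UniformTransporter G P) (p₀ : P) :
    IsHurewiczFibration fun g : G => g • p₀ := by
  obtain ⟨L, hL₀, hL⟩ := τ.exists_pathTransport
  intro X _ g H hH
  refine ⟨⟨fun z => L (H.curry z.1, z.2) * g z.1, by fun_prop⟩, fun x => ?_, fun z => ?_⟩
  · rw [ContinuousMap.coe_mk, hL₀, one_mul]
  · calc (L (H.curry z.1, z.2) * g z.1) • p₀ = L (H.curry z.1, z.2) • H.curry z.1 0 := by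
          rw [mul_smul]
          exact congrArg _ (hH z.1).symm
      _ = H z := hL _ _

end UniformTransporter

end PathTransport

section OrthogonalIsometries

variable {ι A : Type*} [Ring A] [StarRing A]

/-- A family of isometries with pairwise orthogonal ranges. -/
structure OrthogonalIsometries (s : ι → A) : Prop where
  star_mul_self : ∀ i, star (s i) * s i = 1
  star_mul_of_ne : ∀ i j, i ≠ j → star (s i) * s j = 0

theorem OrthogonalIsometries.star_sum_mul_sum {x : ι → A} (hx : OrthogonalIsometries x) (y : ι → A)
    (t : Finset ι) :
    star (∑ i ∈ t, x i * star (y i)) * ∑ i ∈ t, x i * star (y i) = ∑ i ∈ t, y i * star (y i) := by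
  rw [star_sum, Finset.sum_mul]
  refine Finset.sum_congr rfl fun i hi => ?_
  rw [Finset.mul_sum, Finset.sum_eq_single_of_mem i hi fun j _ hj => ?_]
  · rw [star_mul, star_star, mul_assoc, ← mul_assoc (star (x i)), hx.star_mul_self, one_mul]
  · rw [star_mul, star_star, mul_assoc, ← mul_assoc (star (x i)), hx.star_mul_of_ne _ _ hj.symm,
      zero_mul, mul_zero]

/-- The shift `s n (1 - e) + s (n + 1) e` of a sequence of isometries along a projection `e`. As in
Hilbert's hotel, it frees the part `s 0 e (s 0)*` of the range of `s 0` and no other. -/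
def hotelShift (s : ℕ → A) (e : A) (n : ℕ) : A := s n * (1 - e) + s (n + 1) * e

theorem OrthogonalIsometries.hotelShift {s : ℕ → A} (hs : OrthogonalIsometries s) {e : A}
    (he : IsStarProjection e) : OrthogonalIsometries (hotelShift s e) := by
  have star_mul (m n : ℕ) : star (_root_.hotelShift s e m) * _root_.hotelShift s e n =
      (1 - e) * (star (s m) * s n) * (1 - e) + (1 - e) * (star (s m) * s (n + 1)) * e +
        e * (star (s (m + 1)) * s n) * (1 - e) + e * (star (s (m + 1)) * s (n + 1)) * e := by
    simp only [_root_.hotelShift, star_add, star_mul, star_sub, star_one,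
      he.isSelfAdjoint.star_eq]
    noncomm_ring
  refine ⟨fun n => ?_, fun m n hmn => ?_⟩
  · rw [star_mul, hs.star_mul_self, hs.star_mul_self, hs.star_mul_of_ne _ _ n.succ_ne_self,
      hs.star_mul_of_ne _ _ n.succ_ne_self.symm]
    simp only [mul_one, mul_zero, zero_mul, add_zero, he.one_sub.isIdempotentElem.eq,
      he.isIdempotentElem.eq, sub_add_cancel]
  · have cross₁ : (1 - e) * (star (s m) * s (n + 1)) * e = 0 := by
      obtain rfl | h := eq_or_ne m (n + 1)
      · rw [hs.star_mul_self, mul_one, he.one_sub_mul_self]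
      · rw [hs.star_mul_of_ne _ _ h, mul_zero, zero_mul]
    have cross₂ : e * (star (s (m + 1)) * s n) * (1 - e) = 0 := by
      obtain rfl | h := eq_or_ne (m + 1) n
      · rw [hs.star_mul_self, mul_one, he.mul_one_sub_self]
      · rw [hs.star_mul_of_ne _ _ h, mul_zero, zero_mul]
    rw [star_mul, cross₁, cross₂, hs.star_mul_of_ne _ _ hmn,
      hs.star_mul_of_ne _ _ (Nat.succ_injective.ne hmn)]
    simp only [mul_zero, zero_mul, add_zero]

theorem hotelShift_mul_star (s : ℕ → A) {e : A} (he : IsStarProjection e) (n : ℕ) :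
    hotelShift s e n * star (hotelShift s e n) =
      s n * star (s n) - (s n * e * star (s n) - s (n + 1) * e * star (s (n + 1))) := by
  calc hotelShift s e n * star (hotelShift s e n) =
        s n * ((1 - e) * (1 - e)) * star (s n) + s n * ((1 - e) * e) * star (s (n + 1)) +
          s (n + 1) * (e * (1 - e)) * star (s n) + s (n + 1) * (e * e) * star (s (n + 1)) := by
        simp only [hotelShift, star_add, star_mul, star_sub, star_one, he.isSelfAdjoint.star_eq]
        noncomm_ring
    _ = s n * (1 - e) * star (s n) + s (n + 1) * e * star (s (n + 1)) := by
        rw [he.one_sub.isIdempotentElem.eq, he.isIdempotentElem.eq, he.one_sub_mul_self,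
          he.mul_one_sub_self, mul_zero, mul_zero, zero_mul, zero_mul, add_zero, add_zero]
    _ = _ := by noncomm_ring

end OrthogonalIsometries

section StrictSums

variable {B : Type*} [NonUnitalCStarAlgebra B]

theorem multiplier_eq_of_fst_eq {x y : 𝓜(ℂ, B)} (h : ∀ b, x.fst b = y.fst b) : x = y := by
  have hfst : (x - y).fst = 0 := by
    ext b
    rw [DoubleCentralizer.sub_fst, sub_apply, h, sub_self,
      zero_apply]
  rw [← sub_eq_zero, ← norm_eq_zero, ← DoubleCentralizer.norm_fst, hfst, norm_zero]

theorem mul_fst_apply (x y : 𝓜(ℂ, B)) (b : B) : (x * y).fst b = x.fst (y.fst b) := by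
  rw [DoubleCentralizer.mul_fst, mul_apply_eq_comp]

theorem fst_mul (x : 𝓜(ℂ, B)) (b c : B) : x.fst (b * c) = x.fst b * c := by
  have mul_left (a : B) : a * (x.fst (b * c) - x.fst b * c) = 0 := by
    rw [mul_sub, ← x.central, ← mul_assoc, ← mul_assoc, ← x.central, sub_self]
  exact sub_eq_zero.1 ((CStarRing.star_mul_self_eq_zero_iff _).1 (mul_left _))

theorem mul_coe_eq_coe_fst (x : 𝓜(ℂ, B)) (b : B) :
    x * (b : 𝓜(ℂ, B)) = ((x.fst b : B) : 𝓜(ℂ, B)) :=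
  multiplier_eq_of_fst_eq fun c => by simp [fst_mul]

theorem norm_coe_multiplier (b : B) : ‖(b : 𝓜(ℂ, B))‖ = ‖b‖ := by
  rw [← DoubleCentralizer.norm_fst]
  simp

theorem norm_fst_apply_sq_le (x : 𝓜(ℂ, B)) (b : B) :
    ‖x.fst b‖ ^ 2 ≤ ‖b‖ * ‖(star x * x).fst b‖ := by
  have factor : star (x.fst b) * x.fst b = star b * (star x * x).fst b := by
    rw [mul_fst_apply, ← (star x).central, DoubleCentralizer.star_snd, star_star]
  rw [sq, ← CStarRing.norm_star_mul_self, factor, ← norm_star b]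
  exact norm_mul_le _ _

/-- The series `∑ a n` converges to `x` on `B` from the left: `(∑ n < N, a n) b → x b` for every
`b : B`. For a series of self-adjoint multipliers this is convergence in the strict topology. -/
def HasStrictSum (a : ℕ → 𝓜(ℂ, B)) (x : 𝓜(ℂ, B)) : Prop :=
  ∀ b, Tendsto (fun N => (∑ n ∈ Finset.range N, a n).fst b) atTop (𝓝 (x.fst b))

namespace HasStrictSum

variable {a c : ℕ → 𝓜(ℂ, B)} {x y : 𝓜(ℂ, B)}

theorem unique (hx : HasStrictSum a x) (hy : HasStrictSum a y) : x = y :=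
  multiplier_eq_of_fst_eq fun b => tendsto_nhds_unique (hx b) (hy b)

theorem mul_left (hx : HasStrictSum a x) (y : 𝓜(ℂ, B)) :
    HasStrictSum (fun n => y * a n) (y * x) := fun b => by
  simpa only [← Finset.mul_sum, mul_fst_apply, Function.comp_def] using
    (y.fst.continuous.tendsto _).comp (hx b)

theorem sub (hx : HasStrictSum a x) (hy : HasStrictSum c y) :
    HasStrictSum (fun n => a n - c n) (x - y) := fun b => by
  simpa only [Finset.sum_sub_distrib, DoubleCentralizer.sub_fst, sub_apply]
    using (hx b).sub (hy b)

theorem of_tendsto_zero (hc : ∀ b, Tendsto (fun n => (c n).fst b) atTop (𝓝 0)) :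
    HasStrictSum (fun n => c n - c (n + 1)) (c 0) := fun b => by
  simpa only [Finset.sum_range_sub', DoubleCentralizer.sub_fst, sub_apply,
    sub_zero] using (hc b).const_sub ((c 0).fst b)

theorem tendsto_zero (hx : HasStrictSum a x) (b : B) :
    Tendsto (fun n => (a n).fst b) atTop (𝓝 0) := by
  simpa only [Function.comp_def, Finset.sum_range_succ, DoubleCentralizer.add_fst,
    add_apply, add_sub_cancel_left, sub_self] using
    ((hx b).comp (tendsto_add_atTop_nat 1)).sub (hx b)

theorem tendsto_star_fst {s : ℕ → 𝓜(ℂ, B)} (hs : HasStrictSum (fun n => s n * star (s n)) x)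
    (b : B) : Tendsto (fun n => (star (s n)).fst b) atTop (𝓝 0) := by
  have hbound : Tendsto (fun n => √(‖b‖ * ‖(s n * star (s n)).fst b‖)) atTop (𝓝 0) := by
    simpa using ((hs.tendsto_zero b).norm.const_mul ‖b‖).sqrt
  refine squeeze_zero_norm (fun n => Real.le_sqrt_of_sq_le ?_) hbound
  simpa only [star_star] using norm_fst_apply_sq_le (star (s n)) b

theorem mul_eq {x y : ℕ → 𝓜(ℂ, B)} {z : 𝓜(ℂ, B)}
    (hz : HasStrictSum (fun n => x n * star (y n)) z) (hy : OrthogonalIsometries y) (n : ℕ) :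
    z * y n = x n := by
  refine multiplier_eq_of_fst_eq fun b => ?_
  rw [mul_fst_apply]
  refine tendsto_nhds_unique (hz _) (tendsto_const_nhds.congr' ?_)
  filter_upwards [eventually_gt_atTop n] with N hN
  rw [← mul_fst_apply, Finset.sum_mul,
    Finset.sum_eq_single_of_mem n (Finset.mem_range.2 hN) fun m _ hm => ?_]
  · rw [mul_assoc, hy.star_mul_self, mul_one]
  · rw [mul_assoc, hy.star_mul_of_ne _ _ hm, mul_zero]

end HasStrictSum

theorem exists_hasStrictSum_of_cauchySeq {a : ℕ → 𝓜(ℂ, B)}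
    (ha : ∀ b, CauchySeq fun N => (∑ n ∈ Finset.range N, a n).fst b)
    (ha' : ∀ b, CauchySeq fun N => (∑ n ∈ Finset.range N, star (a n)).fst b) :
    ∃ x, HasStrictSum a x ∧ HasStrictSum (fun n => star (a n)) (star x) := by
  choose f hf using fun b => cauchySeq_tendsto_of_complete (ha b)
  choose g hg using fun b => cauchySeq_tendsto_of_complete (ha' b)
  have hsnd (b : B) :
      Tendsto (fun N => (∑ n ∈ Finset.range N, a n).snd b) atTop (𝓝 (star (g (star b)))) := by
    simpa only [← star_sum, DoubleCentralizer.star_fst, star_star] using (hg (star b)).star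
  let L := continuousLinearMapOfTendsto (fun N => (∑ n ∈ Finset.range N, a n).fst)
    (tendsto_pi_nhds.2 hf)
  let R := continuousLinearMapOfTendsto (fun N => (∑ n ∈ Finset.range N, a n).snd)
    (tendsto_pi_nhds.2 hsnd)
  refine ⟨⟨(L, R), fun b c => ?_⟩, hf, fun b => ?_⟩
  · refine tendsto_nhds_unique ((hsnd b).mul_const c) (((hf c).const_mul b).congr fun N => ?_)
    exact ((∑ n ∈ Finset.range N, a n).central b c).symm
  · rw [DoubleCentralizer.star_fst]
    change Tendsto _ _ (𝓝 (star (star (g (star (star b))))))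
    rw [star_star, star_star]
    exact hg b

theorem OrthogonalIsometries.cauchySeq_sum_mul_star {x y : ℕ → 𝓜(ℂ, B)} {f : 𝓜(ℂ, B)}
    (hx : OrthogonalIsometries x) (hy : HasStrictSum (fun n => y n * star (y n)) f) (b : B) :
    CauchySeq fun N => (∑ n ∈ Finset.range N, x n * star (y n)).fst b := by
  have hcauchy := (hy b).cauchySeq
  rw [Metric.cauchySeq_iff'] at hcauchy ⊢
  intro ε hε
  obtain ⟨N, hN⟩ := hcauchy (ε ^ 2 / (‖b‖ + 1)) (by positivity)
  refine ⟨N, fun n hn => ?_⟩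
  have dist_eq (z : ℕ → 𝓜(ℂ, B)) : dist ((∑ k ∈ Finset.range n, z k).fst b)
      ((∑ k ∈ Finset.range N, z k).fst b) = ‖(∑ k ∈ Finset.Ico N n, z k).fst b‖ := by
    rw [Finset.sum_Ico_eq_sub _ hn, DoubleCentralizer.sub_fst, sub_apply,
      dist_eq_norm]
  have tail_lt := hN n hn
  rw [dist_eq, lt_div_iff₀ (by positivity)] at tail_lt
  rw [dist_eq]
  refine lt_of_pow_lt_pow_left₀ 2 hε.le ?_
  calc ‖(∑ k ∈ Finset.Ico N n, x k * star (y k)).fst b‖ ^ 2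
      ≤ ‖b‖ * ‖(∑ k ∈ Finset.Ico N n, y k * star (y k)).fst b‖ := by
        rw [← hx.star_sum_mul_sum]
        exact norm_fst_apply_sq_le _ b
    _ ≤ ‖(∑ k ∈ Finset.Ico N n, y k * star (y k)).fst b‖ * (‖b‖ + 1) := by
        linarith [norm_nonneg ((∑ k ∈ Finset.Ico N n, y k * star (y k)).fst b)]
    _ < ε ^ 2 := tail_lt

theorem OrthogonalIsometries.mvNEquiv {x y : ℕ → 𝓜(ℂ, B)} {e f : 𝓜(ℂ, B)}
    (hx : OrthogonalIsometries x) (hy : OrthogonalIsometries y)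
    (he : HasStrictSum (fun n => x n * star (x n)) e)
    (hf : HasStrictSum (fun n => y n * star (y n)) f) : MvNEquiv e f := by
  have star_term (n : ℕ) : star (y n * star (x n)) = x n * star (y n) := by
    rw [star_mul, star_star]
  obtain ⟨v, hv, hv'⟩ := exists_hasStrictSum_of_cauchySeq (hy.cauchySeq_sum_mul_star he)
    (by simpa only [star_term] using hx.cauchySeq_sum_mul_star hf)
  simp only [star_term] at hv'
  refine ⟨v, (hv.mul_left (star v)).unique ?_, (hv'.mul_left v).unique ?_⟩
  · simpa only [← mul_assoc, hv'.mul_eq hy] using he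
  · simpa only [← mul_assoc, hv.mul_eq hx] using hf

end StrictSums

section Stable

variable {B : Type*} [NonUnitalCStarAlgebra B]

theorem IsStable.exists_orthogonalIsometries (hB : IsStable B) :
    ∃ s : ℕ → 𝓜(ℂ, B), OrthogonalIsometries s ∧ HasStrictSum (fun n => s n * star (s n)) 1 := by
  obtain ⟨s, hs, hso, hsum⟩ := hB
  refine ⟨s, ⟨hs, hso⟩, fun b => ?_⟩
  refine tendsto_iff_norm_sub_tendsto_zero.2
    ((tendsto_iff_norm_sub_tendsto_zero.1 (hsum b)).congr fun N => ?_)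
  have coe_sub (c d : B) : (c : 𝓜(ℂ, B)) - (d : 𝓜(ℂ, B)) = ((c - d : B) : 𝓜(ℂ, B)) :=
    (map_sub (DoubleCentralizer.coeHom (𝕜 := ℂ) (A := B)) c d).symm
  rw [mul_coe_eq_coe_fst, coe_sub, norm_coe_multiplier, DoubleCentralizer.one_fst,
    one_apply_eq_self]

theorem OrthogonalIsometries.mvNEquiv_one_sub_conj {s : ℕ → 𝓜(ℂ, B)} (hs : OrthogonalIsometries s)
    (hsum : HasStrictSum (fun n => s n * star (s n)) 1) {e : 𝓜(ℂ, B)} (he : IsStarProjection e) :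
    MvNEquiv 1 (1 - s 0 * e * star (s 0)) := by
  have tendsto_conj (b : B) : Tendsto (fun n => (s n * e * star (s n)).fst b) atTop (𝓝 0) := by
    refine squeeze_zero_norm (a := fun n => ‖e‖ * ‖(star (s n)).fst b‖) (fun n => ?_)
      (by simpa using (hsum.tendsto_star_fst b).norm.const_mul ‖e‖)
    have norm_le : ‖s n * e‖ ≤ 1 * ‖e‖ := (norm_mul_le _ _).trans <|
      mul_le_mul_of_nonneg_right (norm_le_one_of_star_mul_self_eq_one (hs.star_mul_self n))
        (norm_nonneg e)
    rw [one_mul, ← DoubleCentralizer.norm_fst] at norm_le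
    rw [mul_fst_apply]
    exact ContinuousLinearMap.le_of_opNorm_le _ norm_le _
  refine hs.mvNEquiv (hs.hotelShift he) hsum ?_
  simpa only [hotelShift_mul_star s he] using hsum.sub (.of_tendsto_zero tendsto_conj)

theorem isStarProjection_conj {A : Type*} [Semiring A] [StarRing A] {e s : A}
    (he : IsStarProjection e) (hs : star s * s = 1) : IsStarProjection (s * e * star s) := by
  refine ⟨?_, he.isSelfAdjoint.conjugate s⟩
  calc s * e * star s * (s * e * star s) = s * e * (star s * s) * e * star s := by
        simp only [mul_assoc]
    _ = s * e * star s := by rw [hs, mul_one, mul_assoc s, he.isIdempotentElem.eq]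

theorem IsStable.mvNEquiv_one_of_mul_isometry_eq (hB : IsStable B) {e r : 𝓜(ℂ, B)}
    (he : IsStarProjection e) (hr : star r * r = 1) (her : e * r = r) : MvNEquiv e 1 := by
  obtain ⟨s, hs, hsum⟩ := hB.exists_orthogonalIsometries
  have hrr_one : MvNEquiv (r * star r) 1 := ⟨star r, by rw [star_star], by rw [star_star, hr]⟩
  have hrr := hrr_one.isStarProjection_of_one
  have hrest : IsStarProjection (e - r * star r) :=
    hrr.sub_of_mul_eq_right he (by rw [← mul_assoc, her])
  have hconj := isStarProjection_conj hrest (hs.star_mul_self 0)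
  have hconj_equiv : MvNEquiv (e - r * star r) (s 0 * (e - r * star r) * star (s 0)) :=
    (MvNEquiv.conj_left (hs.star_mul_self 0) ⟨_, by
      rw [hrest.isSelfAdjoint.star_eq, hrest.isIdempotentElem.eq], by
      rw [hrest.isSelfAdjoint.star_eq, hrest.isIdempotentElem.eq]⟩).symm
  have hrr_equiv := hrr_one.trans hrr.isIdempotentElem hconj.one_sub.isIdempotentElem
    (hs.mvNEquiv_one_sub_conj hsum hrest)
  have horth : r * star r * (e - r * star r) = 0 := by
    rw [mul_sub, hrr.isIdempotentElem.eq, mul_assoc, ← he.isSelfAdjoint.star_eq, ← star_mul, her,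
      sub_self]
  obtain ⟨v, hv, hv', -⟩ := MvNEquiv.exists_add_of_orthogonal hrr hrest hconj.one_sub hconj horth
    hconj.one_sub_mul_self hrr_equiv hconj_equiv
  exact ⟨v, by rw [hv, add_sub_cancel], by rw [hv', sub_add_cancel]⟩

end Stable

section IsometryCorrection

variable {A Q : Type*} [CStarAlgebra A] [CStarAlgebra Q]

theorem star_mul_self_add_of_orthogonal {R : Type*} [Ring R] [StarRing R] {v r : R}
    (hr : star r * r = 1) (hrv : star r * v = 0) (f g : R) :
    star (v * f + r * g) * (v * f + r * g) = star f * (star v * v) * f + star g * g := by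
  have hvr : star v * r = 0 := by simpa using congrArg star hrv
  calc star (v * f + r * g) * (v * f + r * g) = star f * (star v * v) * f +
        star f * (star v * r) * g + star g * (star r * v) * f + star g * (star r * r) * g := by
        rw [star_add, star_mul, star_mul]
        noncomm_ring
    _ = star f * (star v * v) * f + star g * g := by
        rw [hvr, hrv, hr, mul_zero, mul_zero, zero_mul, zero_mul, add_zero, add_zero, mul_one]

theorem cfc_mul_self_mul_cfc_add_sq_eq_one {x : A} (hx : IsSelfAdjoint x) {F G : ℝ → ℝ}
    (hF : Continuous F) (hG : Continuous G)
    (h : ∀ t ∈ spectrum ℝ x, F t * t * F t + G t * G t = 1) :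
    cfc F x * x * cfc F x + cfc G x * cfc G x = 1 := by
  calc cfc F x * x * cfc F x + cfc G x * cfc G x
      = cfc (fun t => F t * t * F t + G t * G t) x := by
        rw [cfc_add (a := x) (fun t => F t * t * F t) (fun t => G t * G t) (by fun_prop)
          (by fun_prop), cfc_mul (fun t => F t * t) F x (by fun_prop) (by fun_prop),
          cfc_mul F (fun t => t) x (by fun_prop) (by fun_prop), cfc_id' ℝ x,
          cfc_mul G G x (by fun_prop) (by fun_prop)]
    _ = cfc (fun _ : ℝ => (1 : ℝ)) x := cfc_congr h
    _ = 1 := cfc_const_one ℝ x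

theorem map_cfc_star_mul_self_of_isometry (π : A →⋆ₐ[ℂ] Q) {v : A} (hv : star (π v) * π v = 1)
    {F : ℝ → ℝ} (hF : Continuous F) : π (cfc F (star v * v)) = algebraMap ℝ Q (F 1) := by
  have hsa : IsSelfAdjoint (star v * v) := .star_mul_self v
  rw [StarAlgHomClass.map_cfc (S := ℂ) π _ _ hF.continuousOn (continuous_starAlgHom π) hsa
    (hsa.map π), map_mul, map_star, hv, cfc_apply_one]

theorem inv_sqrt_max_mul_add_sqrt_one_sub_min (t : ℝ) :
    (√(max t 1))⁻¹ * t * (√(max t 1))⁻¹ + √(1 - min t 1) * √(1 - min t 1) = 1 := by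
  rw [Real.mul_self_sqrt (sub_nonneg.2 (min_le_right t 1)), mul_right_comm, ← mul_inv,
    Real.mul_self_sqrt (zero_le_one.trans (le_max_right t 1))]
  obtain h | h := le_total t 1
  · rw [max_eq_right h, min_eq_left h, inv_one, one_mul, add_sub_cancel]
  · rw [max_eq_left h, min_eq_right h, inv_mul_cancel₀ (zero_lt_one.trans_le h).ne', sub_self,
      add_zero]

theorem exists_isometry_add_of_orthogonal (π : A →⋆ₐ[ℂ] Q) {v r : A} (hv : star (π v) * π v = 1)
    (hr : star r * r = 1) (hrv : star r * v = 0) :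
    ∃ f g : A, star (v * f + r * g) * (v * f + r * g) = 1 ∧ π (v * f + r * g) = π v := by
  let F : ℝ → ℝ := fun t => (√(max t 1))⁻¹
  let G : ℝ → ℝ := fun t => √(1 - min t 1)
  have hF : Continuous F := (by fun_prop : Continuous fun t : ℝ => √(max t 1)).inv₀ fun t =>
    (Real.sqrt_pos.2 (zero_lt_one.trans_le (le_max_right t 1))).ne'
  have hG : Continuous G := by fun_prop
  refine ⟨cfc F (star v * v), cfc G (star v * v), ?_, ?_⟩
  · rw [star_mul_self_add_of_orthogonal hr hrv, (cfc_predicate F _ : IsSelfAdjoint _).star_eq,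
      (cfc_predicate G _ : IsSelfAdjoint _).star_eq]
    exact cfc_mul_self_mul_cfc_add_sq_eq_one (.star_mul_self v) hF hG fun t _ =>
      inv_sqrt_max_mul_add_sqrt_one_sub_min t
  · rw [map_add, map_mul, map_mul, map_cfc_star_mul_self_of_isometry π hv hF,
      map_cfc_star_mul_self_of_isometry π hv hG]
    simp [F, G]

end IsometryCorrection

section CoronaLifting

variable {B Q : Type*} [NonUnitalCStarAlgebra B] [CStarAlgebra Q]

theorem star_mul_self_mul_of_isometry {R : Type*} [Monoid R] [StarMul R] {r s : R}
    (hr : star r * r = 1) (hs : star s * s = 1) : star (r * s) * (r * s) = 1 := by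
  rw [star_mul, mul_assoc, ← mul_assoc (star r), hr, one_mul, hs]

theorem IsStable.exists_isometry_mul (hB : IsStable B) {w : 𝓜(ℂ, B)}
    (hw : inCanonicalIdeal (star w * w - 1)) : ∃ c, star (w * c) * (w * c) = 1 := by
  obtain ⟨s, hs, hsum⟩ := hB.exists_orthogonalIsometries
  obtain ⟨b, hb⟩ := hw
  obtain ⟨k, hk⟩ := ((hsum.tendsto_star_fst b).norm.eventually
    (gt_mem_nhds (by rw [norm_zero]; exact one_pos))).exists
  have hcompress : star (w * s k) * (w * s k) =
      1 - -(((star (s k)).fst b : B) * s k : 𝓜(ℂ, B)) := by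
    rw [← mul_coe_eq_coe_fst, hb, sub_neg_eq_add, mul_sub, sub_mul, mul_one, hs.star_mul_self,
      add_sub_cancel, star_mul]
    simp only [mul_assoc]
  have hunit : IsUnit (star (w * s k) * (w * s k)) := by
    rw [hcompress]
    refine isUnit_one_sub_of_norm_lt_one ?_
    calc ‖-(((star (s k)).fst b : B) * s k : 𝓜(ℂ, B))‖ ≤ ‖(star (s k)).fst b‖ * ‖s k‖ := by
          rw [norm_neg, ← norm_coe_multiplier ((star (s k)).fst b)]
          exact norm_mul_le _ (s k)
      _ ≤ ‖(star (s k)).fst b‖ := mul_le_of_le_one_right (norm_nonneg _)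
          (norm_le_one_of_star_mul_self_eq_one (hs.star_mul_self k))
      _ < 1 := hk
  exact ⟨s k * invAbs (w * s k), by simpa only [mul_assoc] using star_mul_self_mul_invAbs hunit⟩

variable {π : 𝓜(ℂ, B) →⋆ₐ[ℂ] Q}

theorem IsStable.exists_lift_orthogonal_isometry (hB : IsStable B) (hπ : Function.Surjective π)
    (hker : ∀ m, π m = 0 → inCanonicalIdeal m) {v w : Q} (hv : star v * v = 1)
    (hw : star w * w = 1) (hwv : star w * v = 0) :
    ∃ V R : 𝓜(ℂ, B), star V * V = 1 ∧ star R * R = 1 ∧ star R * V = 0 ∧ π V = v := by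
  obtain ⟨s, hs, -⟩ := hB.exists_orthogonalIsometries
  obtain ⟨V₀, rfl⟩ := hπ v
  obtain ⟨W, rfl⟩ := hπ w
  obtain ⟨c, hR⟩ := hB.exists_isometry_mul (w := W) <| hker _ <| by
    rw [map_sub, map_mul, map_star, hw, map_one, sub_self]
  set R := W * c with hRdef
  have hRv : π (star R * V₀) = 0 := by
    rw [hRdef, map_mul, map_star, map_mul, star_mul, mul_assoc, hwv, mul_zero]
  set V₁ := V₀ - R * (star R * V₀) with hV₁def
  have hV₁ : π V₁ = π V₀ := by
    rw [hV₁def, map_sub, map_mul π R, hRv, mul_zero, sub_zero]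
  have hRV₁ : star R * V₁ = 0 := by rw [hV₁def, mul_sub, ← mul_assoc, hR, one_mul, sub_self]
  -- The range of `R` splits: the part under `s 1` corrects `V₁`, the part under `s 0` stays free.
  obtain ⟨f, g, hV, hπV⟩ := exists_isometry_add_of_orthogonal π (v := V₁) (r := R * s 1)
    (by rw [hV₁, hv]) (star_mul_self_mul_of_isometry hR (hs.star_mul_self 1))
    (by rw [star_mul, mul_assoc, hRV₁, mul_zero])
  refine ⟨V₁ * f + R * s 1 * g, R * s 0, hV,
    star_mul_self_mul_of_isometry hR (hs.star_mul_self 0), ?_, hπV.trans hV₁⟩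
  calc star (R * s 0) * (V₁ * f + R * s 1 * g) =
        star (s 0) * (star R * V₁) * f + star (s 0) * (star R * R) * s 1 * g := by
        rw [star_mul]
        noncomm_ring
    _ = 0 := by
        rw [hRV₁, hR, mul_one, hs.star_mul_of_ne 0 1 zero_ne_one, mul_zero, zero_mul, zero_mul,
          add_zero]

theorem IsStable.exists_lift_projInfty (hB : IsStable B) (hπ : Function.Surjective π)
    (hker : ∀ m, π m = 0 → inCanonicalIdeal m) {p : Q} (hp : MvNEquiv p 1)
    (hp' : MvNEquiv (1 - p) 1) : ∃ P, MvNEquiv P 1 ∧ MvNEquiv (1 - P) 1 ∧ π P = p := by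
  have hproj := hp.isStarProjection_of_one
  obtain ⟨v, hvp, hv⟩ := hp
  obtain ⟨w, hwp, hw⟩ := hp'
  have hwv : star (star w) * star v = 0 := by
    rw [star_star]
    exact mul_star_eq_zero_of_orthogonal hproj.one_sub hproj hproj.one_sub_mul_self hwp hvp
  obtain ⟨V, R, hV, hR, hRV, hπV⟩ := hB.exists_lift_orthogonal_isometry hπ hker
    (by rwa [star_star]) (by rwa [star_star]) hwv
  have hVR : star V * R = 0 := by simpa using congrArg star hRV
  have hVV : MvNEquiv (V * star V) 1 := ⟨star V, by rw [star_star], by rw [star_star, hV]⟩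
  refine ⟨V * star V, hVV, hB.mvNEquiv_one_of_mul_isometry_eq
    hVV.isStarProjection_of_one.one_sub hR ?_, ?_⟩
  · rw [sub_mul, one_mul, mul_assoc, hVR, mul_zero, sub_zero]
  · rw [map_mul, map_star, hπV, star_star, hvp]

theorem IsStable.exists_unitary_map_conj_eq (hB : IsStable B) (hπ : Function.Surjective π)
    (hker : ∀ m, π m = 0 → inCanonicalIdeal m) {P₀ : 𝓜(ℂ, B)} (h₀ : MvNEquiv P₀ 1)
    (h₀' : MvNEquiv (1 - P₀) 1) {p : Q} (hp : MvNEquiv p 1) (hp' : MvNEquiv (1 - p) 1) :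
    ∃ U : unitary 𝓜(ℂ, B), π (U * P₀ * star (U : 𝓜(ℂ, B))) = p := by
  obtain ⟨P, hP, hP', rfl⟩ := hB.exists_lift_projInfty hπ hker hp hp'
  have hproj₀ := h₀.isStarProjection_of_one
  have hproj := hP.isStarProjection_of_one
  obtain ⟨U, hU⟩ := MvNEquiv.exists_unitary_conj_eq hproj₀ hproj
    (h₀.trans hproj₀.isIdempotentElem hproj.isIdempotentElem hP.symm)
    (h₀'.trans hproj₀.one_sub.isIdempotentElem hproj.one_sub.isIdempotentElem hP'.symm)
  exact ⟨U, congrArg π hU⟩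

end CoronaLifting

section ConjugationAction

variable {A Q : Type*} [CStarAlgebra A] [CStarAlgebra Q]

theorem MvNEquiv.conj_one_sub {R : Type*} [Ring R] [StarRing R] {u p : R} (hu : u ∈ unitary R)
    (h : MvNEquiv (1 - p) 1) : MvNEquiv (1 - u * p * star u) 1 := by
  simpa only [mul_sub, sub_mul, mul_one, Unitary.mul_star_self_of_mem hu] using
    h.conj_left (Unitary.star_mul_self_of_mem hu)

/-- The action of the unitary group of `A` on `Proj_∞(Q)` through `π`, in which `U` acts as
conjugation by `π U`; the map `α_{P₀}` of the theorem is its orbit map at `π P₀`. It depends on `π`,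
so it is not an instance. -/
abbrev conjAction (π : A →⋆ₐ[ℂ] Q) : MulAction (unitary A) (ProjInfty Q) where
  smul U p := ⟨π U * p * star (π U),
    have hU : π U ∈ unitary Q := Unitary.map_mem π U.2
    have hproj := isStarProjection_conj ⟨p.2.1.2, p.2.1.1⟩ (Unitary.star_mul_self_of_mem hU)
    ⟨⟨hproj.isSelfAdjoint, hproj.isIdempotentElem⟩,
      p.2.2.1.conj_left (Unitary.star_mul_self_of_mem hU), p.2.2.2.conj_one_sub hU⟩⟩
  one_smul p := Subtype.ext <| show π (1 : unitary A) * (p : Q) * star (π (1 : unitary A)) = p by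
    simp
  mul_smul U V p := Subtype.ext <| show π (U * V : unitary A) * (p : Q) *
      star (π (U * V : unitary A)) = π U * (π V * p * star (π V)) * star (π U) by
    simp [mul_assoc]

theorem nonempty_uniformTransporter_conjAction (π : A →⋆ₐ[ℂ] Q) (hπ : Function.Surjective π) :
    letI := conjAction π
    Nonempty (UniformTransporter (unitary A) (ProjInfty Q)) := by
  let _ := conjAction π
  obtain ⟨τ, δ, hδ, hτ_cont, hτ, hτ_diag⟩ := exists_unitary_transport π hπ
  have isStarProjection (p : ProjInfty Q) : IsStarProjection (p : Q) := ⟨p.2.1.2, p.2.1.1⟩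
  exact ⟨{
    toFun := fun z => τ (z.1, z.2)
    radius := δ
    radius_pos := hδ
    continuousOn := hτ_cont.comp (by fun_prop) fun z hz =>
      ⟨isStarProjection z.1, isStarProjection z.2, hz⟩
    smul_eq := fun p q hpq => Subtype.ext <|
      hτ p q (isStarProjection p) (isStarProjection q) hpq
    diag := fun p => hτ_diag p (isStarProjection p) }⟩

theorem continuous_conjAction_smul (π : A →⋆ₐ[ℂ] Q) (p : ProjInfty Q) :
    letI := conjAction π
    Continuous fun U : unitary A => U • p := by
  have := continuous_starAlgHom π
  exact Continuous.subtype_mk (by fun_prop) _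

theorem unitary_conj_eq_iff {M : Type*} [Monoid M] [StarMul M] {u p : M} (hu : u ∈ unitary M) :
    u * p * star u = p ↔ u * p = p * u := by
  constructor
  · intro h
    rw [← mul_one (u * p), ← Unitary.star_mul_self_of_mem hu, ← mul_assoc, h]
  · intro h
    rw [h, mul_assoc, Unitary.mul_star_self_of_mem hu, mul_one]

end ConjugationAction

theorem stmt15_general {B Q : Type*} [NonUnitalCStarAlgebra B] [CStarAlgebra Q]
    (hstable : IsStable B) (π : 𝓜(ℂ, B) →⋆ₐ[ℂ] Q) (hπ : Function.Surjective π)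
    (hker : ∀ m : 𝓜(ℂ, B), π m = 0 ↔ inCanonicalIdeal m) (P₀ : 𝓜(ℂ, B))
    (hP₀₁ : MvNEquiv P₀ (1 : 𝓜(ℂ, B))) (hP₀₂ : MvNEquiv (1 - P₀) (1 : 𝓜(ℂ, B))) :
    ∃ α : unitary 𝓜(ℂ, B) → ProjInfty Q,
      (∀ U : unitary 𝓜(ℂ, B),
        (α U : Q) = π ((U : 𝓜(ℂ, B)) * P₀ * star (U : 𝓜(ℂ, B)))) ∧
      Continuous α ∧
      Function.Surjective α ∧
      IsOpenMap α ∧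
      (∀ p : ProjInfty Q, ∃ V : Set (ProjInfty Q), IsOpen V ∧ p ∈ V ∧
        ∃ cs : C(V, unitary 𝓜(ℂ, B)), ∀ v : V, α (cs v) = (v : ProjInfty Q)) ∧
      IsHurewiczFibration α ∧
      (∀ U : unitary 𝓜(ℂ, B), (α U : Q) = π P₀ ↔
        inCanonicalIdeal ((U : 𝓜(ℂ, B)) * P₀ - P₀ * (U : 𝓜(ℂ, B)))) := by
  let _ := conjAction π
  obtain ⟨τ⟩ := nonempty_uniformTransporter_conjAction π hπ
  have hP₀ := hP₀₁.isStarProjection_of_one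
  let p₀ : ProjInfty Q := ⟨π P₀, ⟨hP₀.isSelfAdjoint.map π, hP₀.isIdempotentElem.map π⟩,
    by simpa using hP₀₁.map π, by simpa using hP₀₂.map π⟩
  have coe_smul (U : unitary 𝓜(ℂ, B)) :
      ((U • p₀ : ProjInfty Q) : Q) = π (U * P₀ * star (U : 𝓜(ℂ, B))) := by
    rw [map_mul, map_mul, map_star]
    rfl
  have hsurj : Function.Surjective fun U : unitary 𝓜(ℂ, B) => U • p₀ := fun p => by
    obtain ⟨U, hU⟩ := hstable.exists_unitary_map_conj_eq hπ (fun m => (hker m).1) hP₀₁ hP₀₂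
      p.2.2.1 p.2.2.2
    exact ⟨U, Subtype.ext ((coe_smul U).trans hU)⟩
  refine ⟨fun U => U • p₀, coe_smul, continuous_conjAction_smul π p₀, hsurj, τ.isOpenMap_smul p₀,
    τ.exists_local_section hsurj, τ.isHurewiczFibration_smul p₀, fun U => ?_⟩
  rw [← hker, map_sub, map_mul, map_mul, sub_eq_zero]
  exact unitary_conj_eq_iff (Unitary.map_mem π U.2)

/-- Let `B` be a separable stable C*-algebra, `π : M(B) → C(B)` the corona
quotient map (encoded as a surjective `*`-homomorphism onto a unital C*-algebra `Q` with
kernel the canonical ideal `B`), and `P₀ ∈ M(B)` a projection with `P₀ ∼ 1 ∼ 1 − P₀`.  Then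
the map `α_{P₀} : U(M(B)) → Proj_∞(C(B))`, `U ↦ π(U P₀ U*)`, is a continuous open
surjection with local cross-sections, hence a Hurewicz fibration, and its fiber over
`π(P₀)` is `U_{P₀}(M(B)) = { U ∈ U(M(B)) : U P₀ − P₀ U ∈ B }`. -/
theorem stmt15 {B Q : Type*} [NonUnitalCStarAlgebra B] [TopologicalSpace.SeparableSpace B]
    [CStarAlgebra Q] (hstable : IsStable B)
    (π : 𝓜(ℂ, B) →⋆ₐ[ℂ] Q) (hπ : Function.Surjective π)
    (hker : ∀ m : 𝓜(ℂ, B), π m = 0 ↔ inCanonicalIdeal m)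
    (P₀ : 𝓜(ℂ, B)) (hP₀sa : IsSelfAdjoint P₀) (hP₀idem : IsIdempotentElem P₀)
    (hP₀₁ : MvNEquiv P₀ (1 : 𝓜(ℂ, B))) (hP₀₂ : MvNEquiv (1 - P₀) (1 : 𝓜(ℂ, B))) :
    ∃ α : unitary 𝓜(ℂ, B) → ProjInfty Q,
      (∀ U : unitary 𝓜(ℂ, B),
        (α U : Q) = π ((U : 𝓜(ℂ, B)) * P₀ * star (U : 𝓜(ℂ, B)))) ∧
      Continuous α ∧
      Function.Surjective α ∧
      IsOpenMap α ∧
      (∀ p : ProjInfty Q, ∃ V : Set (ProjInfty Q), IsOpen V ∧ p ∈ V ∧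
        ∃ cs : C(V, unitary 𝓜(ℂ, B)), ∀ v : V, α (cs v) = (v : ProjInfty Q)) ∧
      IsHurewiczFibration α ∧
      (∀ U : unitary 𝓜(ℂ, B), (α U : Q) = π P₀ ↔
        inCanonicalIdeal ((U : 𝓜(ℂ, B)) * P₀ - P₀ * (U : 𝓜(ℂ, B)))) :=
  stmt15_general hstable π hπ hker P₀ hP₀₁ hP₀₂
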